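/- Let k be an algebraically closed field of characteristic 3 and let g = sl_3(k) be the Lie algebra of traceless 3×3 matrices over k. Then the fifth Chevalley–Eilenberg cohomology of g with trivial coefficients satisfies dim_k H^5(g, k) = 7. -/

import Mathlib

/-! Chevalley–Eilenberg cohomology of a Lie algebra with coefficients in a module. -/

section ChevalleyEilenberg

variable (k : Type*) [Field k]
variable (g : Type*) [LieRing g] [LieAlgebra k g]
variable (M : Type*) [AddCommGroup M] [Module k M] [LieRingModule g M] [LieModule k g M]

/-- The Chevalley–Eilenberg differential, as a raw function from alternating `n`-cochains
to `(n+1)`-ary functions: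
`dψ(l₀,…,lₙ) = Σ_{i<j} (−1)^{i+j} ψ(⁅lᵢ,lⱼ⁆, …, l̂ᵢ, …, l̂ⱼ, …) + Σ_i (−1)^i ⁅lᵢ, ψ(…, l̂ᵢ, …)⁆`
(indices written from 0; this is the paper's formula with 1-based indices shifted by one). -/
def ceD : ∀ {n : ℕ}, (g [⋀^Fin n]→ₗ[k] M) → ((Fin (n + 1) → g) → M)
  | 0, ψ, v => ⁅v 0, ψ ![]⁆
  | (n + 1), ψ, v =>
      (∑ i : Fin (n + 2), ∑ j : Fin (n + 2),
        if h : i < j then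
          ((-1 : ℤ) ^ (i.val + j.val)) •
            ψ (Fin.cons ⁅v i, v j⁆
              (fun l => v (i.succAbove
                ((j.pred (Fin.pos_iff_ne_zero.mp (lt_of_le_of_lt i.zero_le h))).succAbove l))))
        else 0)
      + ∑ i : Fin (n + 2), ((-1 : ℤ) ^ i.val) • ⁅v i, ψ (fun l => v (i.succAbove l))⁆

variable {k g M}

private lemma dite_add_zero {P : Prop} [Decidable P] {N : Type*} [AddZeroClass N]
    (A B : P → N) :
    (dite P (fun h => A h + B h) fun _ => 0) =
      (dite P A fun _ => 0) + (dite P B fun _ => 0) := by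
  split_ifs <;> simp

private lemma dite_smul_zero {P : Prop} [Decidable P] {N : Type*} [AddCommGroup N] [Module k N]
    (c : k) (A : P → N) :
    (dite P (fun h => c • A h) fun _ => 0) = c • dite P A fun _ => 0 := by
  split_ifs <;> simp

lemma ceD_add {n : ℕ} (ψ φ : g [⋀^Fin n]→ₗ[k] M) (v : Fin (n + 1) → g) :
    ceD k g M (ψ + φ) v = ceD k g M ψ v + ceD k g M φ v := by
  cases n with
  | zero => simp [ceD]
  | succ n =>
    simp only [ceD, AlternatingMap.add_apply, smul_add, lie_add, dite_add_zero,
      Finset.sum_add_distrib]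
    abel

lemma ceD_smul {n : ℕ} (c : k) (ψ : g [⋀^Fin n]→ₗ[k] M) (v : Fin (n + 1) → g) :
    ceD k g M (c • ψ) v = c • ceD k g M ψ v := by
  cases n with
  | zero => simp [ceD]
  | succ n =>
    simp only [ceD, AlternatingMap.smul_apply, lie_smul, smul_comm _ c, dite_smul_zero,
      ← Finset.smul_sum, smul_add]

lemma ceD_zero {n : ℕ} (v : Fin (n + 1) → g) :
    ceD k g M (0 : g [⋀^Fin n]→ₗ[k] M) v = 0 := by
  cases n with
  | zero => simp [ceD]
  | succ n => simp [ceD]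

variable (k g M)

/-- The space of Chevalley–Eilenberg `n`-cocycles `Zⁿ(g, M)`. -/
def ceZ (n : ℕ) : Submodule k (g [⋀^Fin n]→ₗ[k] M) where
  carrier := {ψ | ∀ v, ceD k g M ψ v = 0}
  add_mem' := by
    intro ψ φ hψ hφ v
    rw [ceD_add, hψ v, hφ v, add_zero]
  zero_mem' := fun v => ceD_zero v
  smul_mem' := by
    intro c ψ hψ v
    rw [ceD_smul, hψ v, smul_zero]

/-- The space of Chevalley–Eilenberg `n`-coboundaries `Bⁿ(g, M)`: in positive degree, the
alternating `n`-cochains that agree (as functions) with `dφ` for some `(n-1)`-cochain `φ`. -/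
def ceB : (n : ℕ) → Submodule k (g [⋀^Fin n]→ₗ[k] M)
  | 0 => ⊥
  | (n + 1) =>
      { carrier := {ψ | ∃ φ : g [⋀^Fin n]→ₗ[k] M, ∀ v, ψ v = ceD k g M φ v}
        add_mem' := by
          rintro ψ χ ⟨φ₁, h₁⟩ ⟨φ₂, h₂⟩
          exact ⟨φ₁ + φ₂, fun v => by
            rw [AlternatingMap.add_apply, h₁ v, h₂ v, ceD_add]⟩
        zero_mem' := ⟨0, fun v => by rw [AlternatingMap.zero_apply, ceD_zero]⟩
        smul_mem' := by
          rintro c ψ ⟨φ, h⟩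
          exact ⟨c • φ, fun v => by rw [AlternatingMap.smul_apply, h v, ceD_smul]⟩ }

/-- The `n`-th Chevalley–Eilenberg cohomology space `Hⁿ(g, M)`: the quotient of the space of
`n`-cocycles by the space of `n`-coboundaries (viewed inside the cocycles). -/
abbrev ceH (n : ℕ) : Type _ :=
  ↥(ceZ k g M n) ⧸ (ceB k g M n).comap (ceZ k g M n).subtype

end ChevalleyEilenberg

/-- The Lie algebra `sl₃(k)` of traceless `3 × 3` matrices over `k`. -/
abbrev sl3 (k : Type*) [Field k] := ↥(LieAlgebra.SpecialLinear.sl (Fin 3) k)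

/-- `k` as the trivial one-dimensional module over `sl₃(k)` (zero bracket action). -/
instance (k : Type*) [Field k] : LieRingModule (sl3 k) k where
  bracket _ _ := 0
  add_lie _ _ _ := by simp
  lie_add _ _ _ := by simp
  leibniz_lie _ _ _ := by simp

instance (k : Type*) [Field k] : LieModule k (sl3 k) k where
  smul_lie _ _ _ := by simp [Bracket.bracket]
  lie_smul _ _ _ := by simp [Bracket.bracket]


/-! ### The differential is alternating in characteristic three -/

namespace SL3

open AlternatingMap

variable {k : Type*} [Field k]

lemma ceD_apply {n : ℕ} (ψ : (sl3 k) [⋀^Fin (n + 1)]→ₗ[k] k) (v : Fin (n + 2) → sl3 k) :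
    ceD k (sl3 k) k ψ v = ∑ i : Fin (n + 2), ∑ j : Fin (n + 2),
        if h : i < j then
          ((-1 : ℤ) ^ (i.val + j.val)) •
            ψ (Fin.cons ⁅v i, v j⁆
              (fun l => v (i.succAbove
                ((j.pred (Fin.pos_iff_ne_zero.mp (lt_of_le_of_lt i.zero_le h))).succAbove l))))
        else 0 := by
  have h0 : ∀ (x : sl3 k) (c : k), ⁅x, c⁆ = 0 := fun _ _ => rfl
  simp only [ceD, h0, smul_zero, Finset.sum_const_zero, add_zero]

/-- The bilinear map `x, y ↦ ψ(⁅x, y⁆, …)`. -/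
noncomputable def brContr {n : ℕ} (ψ : (sl3 k) [⋀^Fin (n + 1)]→ₗ[k] k) :
    (sl3 k) →ₗ[k] (sl3 k) →ₗ[k] (sl3 k) [⋀^Fin n]→ₗ[k] k :=
  LinearMap.mk₂ k (fun x y => curryLeft ψ ⁅x, y⁆)
    (by intros; simp only [add_lie, map_add]) (by intros; simp only [smul_lie, map_smul])
    (by intros; simp only [lie_add, map_add]) (by intros; simp only [lie_smul, map_smul])

/-- The differential as an alternating map. -/
noncomputable def dA {n : ℕ} (ψ : (sl3 k) [⋀^Fin (n + 1)]→ₗ[k] k) :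
    (sl3 k) [⋀^Fin (n + 2)]→ₗ[k] k :=
  alternatizeUncurryFin (alternatizeUncurryFinLM ∘ₗ brContr ψ)

lemma dA_apply [CharP k 3] {n : ℕ} (ψ : (sl3 k) [⋀^Fin (n + 1)]→ₗ[k] k)
    (v : Fin (n + 2) → sl3 k) : dA ψ v = ceD k (sl3 k) k ψ v := by
  have h3 : (3 : k) = 0 := by exact_mod_cast CharP.cast_eq_zero k 3
  rw [ceD_apply, dA, alternatizeUncurryFin_alternatizeUncurryFinLM_comp_apply,
    Fin.sum_univ_castSucc (n := n + 1)]
  have hl : ∀ j : Fin (n + 2), ¬ Fin.last (n + 1) < j := fun j => not_lt.2 (Fin.le_last j)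
  simp only [hl, reduceDIte, Finset.sum_const_zero, add_zero]
  refine Finset.sum_congr rfl fun i _ => ?_
  rw [Fin.sum_univ_succ]
  rw [dif_neg (Fin.not_lt_zero _), zero_add]
  rw [← Finset.sum_filter_add_sum_filter_not Finset.univ (fun j => i ≤ j)
    (fun j : Fin (n + 1) => dite _ _ _)]
  have e2 : ∀ j ∈ Finset.univ.filter (fun j : Fin (n + 1) => ¬ i ≤ j),
      (if h : i.castSucc < j.succ then
          ((-1 : ℤ) ^ (i.castSucc.val + j.succ.val)) •
            ψ (Fin.cons ⁅v i.castSucc, v j.succ⁆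
              (fun l => v (i.castSucc.succAbove
                ((j.succ.pred (Fin.pos_iff_ne_zero.mp
                  (lt_of_le_of_lt i.castSucc.zero_le h))).succAbove l))))
        else 0) = 0 := by
    intro j hj
    rw [dif_neg]
    simp only [Finset.mem_filter, Finset.mem_univ, true_and] at hj
    rwa [Fin.castSucc_lt_succ_iff]
  rw [Finset.sum_eq_zero e2, add_zero]
  have e3 : Finset.univ.filter (fun j : Fin (n + 1) => i ≤ j) = Finset.Ici i := by
    ext; simp
  rw [e3]
  refine Finset.sum_congr rfl fun j hj => ?_
  rw [dif_pos (by rw [Fin.castSucc_lt_succ_iff]; simpa using hj)]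
  have e4 : ∀ x y : sl3 k, ∀ w, brContr ψ x y w = ψ (Fin.cons ⁅x, y⁆ w) := fun _ _ _ => rfl
  rw [e4, e4, ← lie_skew (v i.castSucc) (v j.succ)]
  have e5 : ∀ (x : sl3 k) (w : Fin n → sl3 k), ψ (Fin.cons (-x) w) = - ψ (Fin.cons x w) := by
    intro x w
    have := (curryLeft ψ).map_neg x
    exact congrArg (fun f => f w) this
  simp only [e5]
  have e6 : (j.removeNth (i.castSucc.removeNth v)) = (fun l => v (i.castSucc.succAbove
      ((j.succ.pred (Fin.succ_ne_zero j)).succAbove l))) := by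
    funext l; simp [Fin.removeNth]
  rw [e6]
  simp only [Fin.val_castSucc, Fin.val_succ, ← add_assoc, pow_succ _ (_ + _), zsmul_eq_mul]
  push_cast
  linear_combination (-(-1) ^ ((i : ℕ) + j) * ψ (Fin.cons ⁅v j.succ, v i.castSucc⁆
    (fun l => v (i.castSucc.succAbove
      ((j.succ.pred (Fin.succ_ne_zero j)).succAbove l))))) * h3

end SL3

namespace SL3

open AlternatingMap

/-! ### Formal linear combinations with natural number coefficients -/

/-- Formal linear combinations of index lists. -/
abbrev FC := List (ℕ × List ℕ)

/-- Equality test on lists of numbers. -/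
def keq : List ℕ → List ℕ → Bool
  | [], [] => true
  | a :: r, b :: s => Nat.beq a b && keq r s
  | _, _ => false

lemma keq_iff : ∀ l m : List ℕ, keq l m = true ↔ l = m
  | [], [] => by simp [keq]
  | a :: r, b :: s => by simp [keq, keq_iff r s]
  | [], b :: s => by simp [keq]
  | a :: r, [] => by simp [keq]

/-- The coefficient of `l`. -/
def coef : FC → List ℕ → ℕ
  | [], _ => 0
  | p :: L, l => bif keq p.2 l then p.1 + coef L l else coef L l

/-- Whether all coefficients vanish modulo three. -/
def isZero (L : FC) : Bool := L.all fun p => Nat.beq (coef L p.2 % 3) 0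

/-- Substitution of formal linear combinations. -/
def bind (L : FC) (f : List ℕ → FC) : FC :=
  L.flatMap fun p => (f p.2).map fun q => (p.1 * q.1, q.2)

section lin

variable {k : Type*} [Field k]

/-- Evaluation of a formal linear combination. -/
def lin (x : List ℕ → k) (L : FC) : k := (L.map fun p => (p.1 : k) * x p.2).sum

lemma lin_append (x : List ℕ → k) (L M : FC) : lin x (L ++ M) = lin x L + lin x M := by
  simp [lin]

lemma lin_cons (x : List ℕ → k) (p : ℕ × List ℕ) (M : FC) :
    lin x (p :: M) = p.1 * x p.2 + lin x M := by
  simp [lin]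

lemma lin_nil (x : List ℕ → k) : lin x [] = 0 := rfl

lemma lin_map_mul (x : List ℕ → k) (c : ℕ) (L : FC) :
    lin x (L.map fun q => (c * q.1, q.2)) = c * lin x L := by
  induction L with
  | nil => simp [lin]
  | cons p L ih => rw [List.map_cons, lin_cons, lin_cons, ih]; push_cast; ring

lemma lin_bind (x : List ℕ → k) (L : FC) (f : List ℕ → FC) :
    lin x (bind L f) = lin (fun l => lin x (f l)) L := by
  induction L with
  | nil => rfl
  | cons p L ih =>
    rw [bind, List.flatMap_cons, lin_append, lin_map_mul, lin_cons]
    rw [bind] at ih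
    rw [ih]

lemma lin_flatMap {α : Type*} (x : List ℕ → k) (L : List α) (f : α → FC) :
    lin x (L.flatMap f) = (L.map fun a => lin x (f a)).sum := by
  induction L with
  | nil => rfl
  | cons p L ih => rw [List.flatMap_cons, lin_append, ih]; simp

lemma lin_congr (x y : List ℕ → k) (L : FC) (h : ∀ p ∈ L, x p.2 = y p.2) :
    lin x L = lin y L := by
  unfold lin
  congr 1
  exact List.map_congr_left fun p hp => by rw [h p hp]

lemma lin_eq_sum (x : List ℕ → k) (L : FC) (S : Finset (List ℕ)) (hS : ∀ p ∈ L, p.2 ∈ S) :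
    lin x L = ∑ l ∈ S, (coef L l : k) * x l := by
  induction L with
  | nil => simp [lin, coef]
  | cons p L ih =>
    rw [lin_cons, ih (fun q hq => hS q (List.mem_cons_of_mem _ hq))]
    have : ∀ l, (coef (p :: L) l : k) * x l
        = (if p.2 = l then (p.1 : k) * x l else 0) + (coef L l : k) * x l := by
      intro l
      by_cases h : p.2 = l
      · subst h
        have := (keq_iff p.2 p.2).2 rfl
        simp [coef, this, add_mul]
      · have : keq p.2 l = false := by
          rw [← Bool.not_eq_true, keq_iff]; exact h
        simp [coef, this, h]
    simp only [this, Finset.sum_add_distrib]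
    rw [Finset.sum_ite_eq, if_pos (hS p List.mem_cons_self)]

lemma lin_eq_zero [CharP k 3] (x : List ℕ → k) (L : FC) (h : isZero L = true) :
    lin x L = 0 := by
  rw [lin_eq_sum x L (L.map Prod.snd).toFinset
    (fun p hp => by simpa using ⟨p.1, hp⟩)]
  refine Finset.sum_eq_zero fun l hl => ?_
  simp only [List.mem_toFinset, List.mem_map] at hl
  obtain ⟨p, hp, rfl⟩ := hl
  have := List.all_eq_true.1 h p hp
  have h3 : coef L p.2 % 3 = 0 := Nat.eq_of_beq_eq_true this
  rw [(CharP.cast_eq_zero_iff k 3 _).2 (Nat.dvd_of_mod_eq_zero h3), zero_mul]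

end lin

/-! ### Sorted index lists -/

/-- Sublists of given length, in lexicographic order. -/
def combos : ℕ → List ℕ → List (List ℕ)
  | 0, _ => [[]]
  | _ + 1, [] => []
  | n + 1, a :: r => (combos n r).map (a :: ·) ++ combos (n + 1) r

lemma mem_combos (n : ℕ) (s l : List ℕ) :
    l ∈ combos n s ↔ l.Sublist s ∧ l.length = n := by
  induction s generalizing n l with
  | nil =>
    cases n with
    | zero => simp +contextual [combos]
    | succ n =>
      simp only [combos, List.not_mem_nil, List.sublist_nil, false_iff]
      rintro ⟨rfl, h⟩
      simp at h
  | cons a r ih =>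
    cases n with
    | zero => 
      simp only [combos, List.mem_singleton, List.length_eq_zero_iff]
      constructor
      · rintro rfl; simp
      · exact fun h => h.2
    | succ n =>
      simp only [combos, List.mem_append, List.mem_map, ih]
      constructor
      · rintro (⟨m, ⟨h1, h2⟩, rfl⟩ | ⟨h1, h2⟩)
        · exact ⟨h1.cons_cons a, by simp [h2]⟩
        · exact ⟨h1.cons a, h2⟩
      · rintro ⟨h1, h2⟩
        cases h1 with
        | cons _ h => exact Or.inr ⟨h, h2⟩
        | cons_cons _ h => exact Or.inl ⟨_, ⟨h, by simpa using h2⟩, rfl⟩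

/-- The list `[0, …, 7]`. -/
def r8 : List ℕ := [0, 1, 2, 3, 4, 5, 6, 7]

/-- Insertion of an index into a sorted list, with sign. -/
def ins (c : ℕ) : List ℕ → FC
  | [] => [(1, [c])]
  | a :: r => bif Nat.blt c a then [(1, c :: a :: r)] else
      bif Nat.beq c a then [] else (ins c r).map fun q => (2 * q.1, a :: q.2)

/-- Structure constants of `sl₃`. -/
def brTab : List (List (List (ℕ × ℕ))) :=
  [[[], [(1, 2)], [], [(1, 6)], [], [(2, 4)], [(1, 0)], [(1, 0)]],
   [[(2, 2)], [], [], [], [(1, 7)], [(1, 3)], [(1, 1)], [(1, 1)]],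
   [[], [], [], [(2, 1)], [(1, 0)], [(1, 6), (1, 7)], [(2, 2)], [(2, 2)]],
   [[(2, 6)], [], [(1, 1)], [], [(2, 5)], [], [(2, 3)], [(2, 3)]],
   [[], [(2, 7)], [(2, 0)], [(1, 5)], [], [], [(2, 4)], [(2, 4)]],
   [[(1, 4)], [(2, 3)], [(2, 6), (2, 7)], [], [], [], [(1, 5)], [(1, 5)]],
   [[(2, 0)], [(2, 1)], [(1, 2)], [(1, 3)], [(1, 4)], [(2, 5)], [], []],
   [[(2, 0)], [(2, 1)], [(1, 2)], [(1, 3)], [(1, 4)], [(2, 5)], [], []]]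

/-- The bracket of two basis elements. -/
def br (a b : ℕ) : List (ℕ × ℕ) := (brTab.getD a []).getD b []

/-- The differential evaluated on a list of basis elements. -/
def dl (l : List ℕ) : FC :=
  (List.range l.length).flatMap fun i => (List.range l.length).flatMap fun j =>
    bif Nat.blt i j then
      (br (l.getD i 0) (l.getD j 0)).flatMap fun p =>
        (ins p.2 ((l.eraseIdx j).eraseIdx i)).map fun q =>
          ((bif Nat.beq ((i + j) % 2) 0 then p.1 else 2 * p.1) * q.1, q.2)
    else []

/-- The homotopy `C⁵ → C⁴`, rows indexed by 4-element sets. -/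
def tabH1 : List (List (ℕ × ℕ)) :=
  [[], [], [(2, 8), (1, 43)], [(1, 9)], [], [], [(1, 35), (1, 47), (1, 53)], [(1, 36), (2, 44)],
   [(1, 37)], [(2, 20), (2, 32), (1, 54)], [(2, 21), (1, 29)], [(2, 22)], [(1, 12), (1, 23), (1,
   24), (1, 41)], [(2, 12), (1, 42)], [(2, 43)], [], [], [(2, 25), (1, 43)], [], [], [(2, 28)],
   [], [(1, 29)], [], [(2, 5)], [], [(2, 32), (1, 54)], [], [(2, 49), (1, 50)], [(1, 51)], [(2,
   12), (1, 23), (2, 24), (2, 41)], [(1, 34)], [], [(2, 26)], [(2, 54)], [], [], [(2, 40)], [],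
   [], [], [], [(1, 44)], [], [(2, 3)], [], [(2, 47), (2, 53)], [], [(1, 48)], [], [(2, 38)],
   [(1, 49)], [], [(2, 12), (2, 42)], [(1, 53)], [], [], [], [], [], [], [], [], [], [(2, 23),
   (2, 24), (1, 41), (1, 42)], [(2, 55)], [], [], [(2, 45)], [(2, 31)]]

/-- The homotopy `C⁶ → C⁵`, rows indexed by 5-element sets. -/
def tabH2 : List (List (ℕ × ℕ)) :=
  [[(1, 2)], [(1, 3), (1, 4)], [], [], [(1, 6), (1, 7)], [], [], [(2, 1), (1, 2)], [], [], [(2,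
   11)], [(2, 0)], [], [(1, 13), (1, 22)], [(1, 22)], [(2, 3), (1, 4)], [(2, 15)], [(2, 14), (2,
   15)], [(2, 6), (1, 7)], [(1, 12)], [], [], [], [], [], [], [], [], [], [], [], [], [], [(1,
   10), (2, 11)], [], [], [], [], [], [], [], [], [], [], [], [], [], [], [], [], [], [], [],
   [], [], []]

/-- Representing cocycles, rows indexed by 5-element sets. -/
def tabQ : List (List (ℕ × ℕ)) :=
  [[], [], [(1, 0)], [], [], [], [(1, 1)], [], [], [], [], [], [], [], [], [], [], [], [], [(1,
   6)], [], [], [], [], [], [], [], [(1, 2)], [], [], [(1, 3)], [], [], [], [], [], [], [], [],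
   [(1, 4)], [], [], [], [], [], [], [(1, 5)], [], [], [], [], [], [(1, 6)], [], [], []]

/-- Coordinates of cohomology classes. -/
def tabP : List (List (ℕ × ℕ)) :=
  [[(1, 2)], [(1, 6)], [(1, 26), (1, 27)], [(1, 30)], [(1, 38), (1, 39)], [(1, 46)], [(2, 12),
   (1, 23), (2, 41), (2, 42), (1, 52)]]

/-- Look up a row in a table of formal linear combinations of `n`-element lists. -/
def row (n : ℕ) (T : List (List (ℕ × ℕ))) (i : ℕ) : FC :=
  (T.getD i []).map fun p => (p.1, (combos n r8).getD p.2 [])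

/-- Position of an element. -/
def pos (l : List ℕ) : List (List ℕ) → ℕ
  | [] => 0
  | m :: L => bif keq l m then 0 else pos l L + 1

def h1 (l : List ℕ) : FC := row 5 tabH1 (pos l (combos 4 r8))
def h2 (l : List ℕ) : FC := row 6 tabH2 (pos l (combos 5 r8))
def qRow (l : List ℕ) : List (ℕ × ℕ) := tabQ.getD (pos l (combos 5 r8)) []
def pRow (i : ℕ) : FC := row 5 tabP i

/-- Minus a formal combination. -/
def neg (L : FC) : FC := L.map fun q => (2 * q.1, q.2)

/-- The homotopy identity. -/
lemma check_homotopy : ((combos 5 r8).all fun l =>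
    isZero ((1, l) :: (neg (bind (dl l) h1) ++ neg (bind (h2 l) dl)
      ++ neg ((qRow l).flatMap fun p => (pRow p.2).map fun q => (p.1 * q.1, q.2))))) = true := by
  decide +kernel

lemma check_P : ((List.range 7).all fun i => isZero (bind (pRow i) dl)) = true := by
  decide +kernel

/-- The coefficient of `Q`. -/
def qc (i : ℕ) (l : List ℕ) : ℕ := ((qRow l).map fun p => bif Nat.beq p.2 i then p.1 else 0).sum

lemma check_Q : ((combos 6 r8).all fun m => (List.range 7).all fun i =>
    Nat.beq ((((dl m).map fun p => p.1 * qc i p.2).sum) % 3) 0) = true := by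
  decide +kernel

lemma check_PQ : ((List.range 7).all fun j => (List.range 7).all fun i =>
    Nat.beq ((((pRow j).map fun p => p.1 * qc i p.2).sum) % 3) (bif Nat.beq i j then 1 else 0))
      = true := by
  decide +kernel

lemma check_keys4 : ((combos 5 r8).all fun l => (dl l).all fun p =>
    (combos 4 r8).any fun m => keq p.2 m) = true := by decide +kernel

lemma check_keys5 : ((combos 6 r8).all fun l => (dl l).all fun p =>
    (combos 5 r8).any fun m => keq p.2 m) = true := by decide +kernel

lemma check_keysH2 : ((combos 5 r8).all fun l => (h2 l).all fun p =>
    (combos 6 r8).any fun m => keq p.2 m) = true := by decide +kernel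

lemma check_keysP : ((List.range 7).all fun l => (pRow l).all fun p =>
    (combos 5 r8).any fun m => keq p.2 m) = true := by decide +kernel

end SL3

namespace SL3

open AlternatingMap

/-! ### The basis of `sl₃` -/

/-- Integral matrices giving the basis. -/
def zm : ℕ → Fin 3 → Fin 3 → ℤ
  | 0 => ![![0, 1, 0], ![0, 0, 0], ![0, 0, 0]]
  | 1 => ![![0, 0, 0], ![0, 0, 1], ![0, 0, 0]]
  | 2 => ![![0, 0, 1], ![0, 0, 0], ![0, 0, 0]]
  | 3 => ![![0, 0, 0], ![1, 0, 0], ![0, 0, 0]]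
  | 4 => ![![0, 0, 0], ![0, 0, 0], ![0, 1, 0]]
  | 5 => ![![0, 0, 0], ![0, 0, 0], ![1, 0, 0]]
  | 6 => ![![1, 0, 0], ![0, -1, 0], ![0, 0, 0]]
  | 7 => ![![0, 0, 0], ![0, 1, 0], ![0, 0, -1]]
  | _ => ![![0, 0, 0], ![0, 0, 0], ![0, 0, 0]]

lemma zm_trace (a : ℕ) : zm a 0 0 + zm a 1 1 + zm a 2 2 = 0 := by
  unfold zm
  split <;> rfl

variable {k : Type*} [Field k]

lemma mem_sl_iff (A : Matrix (Fin 3) (Fin 3) k) :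
    A ∈ LieAlgebra.SpecialLinear.sl (Fin 3) k ↔ A 0 0 + A 1 1 + A 2 2 = 0 := by
  have : A ∈ LieAlgebra.SpecialLinear.sl (Fin 3) k ↔ Matrix.trace A = 0 := Iff.rfl
  rw [this, Matrix.trace_fin_three]

variable (k) in
/-- The basis elements. -/
def B (a : ℕ) : sl3 k :=
  ⟨Matrix.of fun i j => (zm a i j : k), by
    rw [mem_sl_iff]
    simp only [Matrix.of_apply]
    exact_mod_cast congrArg (Int.cast : ℤ → k) (zm_trace a)⟩

lemma B_apply (a : ℕ) (i j : Fin 3) : (B k a).1 i j = (zm a i j : k) := rfl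

lemma check_br : ∀ a : Fin 8, ∀ b : Fin 8, ∀ i j : Fin 3,
    ((zm a i 0 * zm b 0 j + zm a i 1 * zm b 1 j + zm a i 2 * zm b 2 j)
      - (zm b i 0 * zm a 0 j + zm b i 1 * zm a 1 j + zm b i 2 * zm a 2 j)
      - ((br a b).map fun p => (p.1 : ℤ) * zm p.2 i j).sum) % 3 = 0 := by
  decide +kernel

lemma coe_list_sum (L : List (sl3 k)) (i j : Fin 3) :
    (L.sum).1 i j = (L.map fun x => x.1 i j).sum := by
  induction L with
  | nil => rfl
  | cons x L ih => rw [List.sum_cons, List.map_cons, List.sum_cons, ← ih]; rfl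

lemma bracket_B [CharP k 3] (a b : ℕ) (ha : a < 8) (hb : b < 8) :
    ⁅B k a, B k b⁆ = ((br a b).map fun p => (p.1 : k) • B k p.2).sum := by
  apply Subtype.ext
  ext i j
  rw [coe_list_sum, LieAlgebra.SpecialLinear.sl_bracket, Matrix.sub_apply, Matrix.mul_apply,
    Matrix.mul_apply, Fin.sum_univ_three, Fin.sum_univ_three, List.map_map]
  have h := check_br ⟨a, ha⟩ ⟨b, hb⟩ i j
  have h2 := (CharP.intCast_eq_zero_iff k 3 _).2 (Int.dvd_of_emod_eq_zero h)
  rw [Int.cast_sub, sub_eq_zero] at h2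
  simp only [B_apply]
  push_cast at h2
  rw [h2, List.map_map]
  congr 1
  refine List.map_congr_left fun p _ => ?_
  simp only [Function.comp_apply, Int.cast_mul, Int.cast_natCast]
  rfl

variable (k) in
/-- Coordinates. -/
noncomputable def coords : sl3 k ≃ₗ[k] (Fin 8 → k) where
  toFun A := ![A.1 0 1, A.1 1 2, A.1 0 2, A.1 1 0, A.1 2 1, A.1 2 0, A.1 0 0, - A.1 2 2]
  map_add' A C := by
    funext i; fin_cases i <;> simp [add_comm]
  map_smul' c A := by
    funext i; fin_cases i <;> simp
  invFun c := ⟨!![c 6, c 0, c 2; c 3, c 7 - c 6, c 1; c 5, c 4, - c 7], by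
    rw [mem_sl_iff]; simp⟩
  left_inv A := by
    have h := (mem_sl_iff A.1).1 A.2
    apply Subtype.ext
    ext i j
    fin_cases i <;> fin_cases j <;> simp
    linear_combination -h
  right_inv c := by
    funext i; fin_cases i <;> simp

variable (k) in
/-- The basis. -/
noncomputable def bas : Module.Basis (Fin 8) k (sl3 k) := Module.Basis.ofEquivFun (coords k)

lemma bas_apply (a : Fin 8) : bas k a = B k a := by
  rw [bas, Module.Basis.coe_ofEquivFun, LinearEquiv.symm_apply_eq]
  funext i
  fin_cases a <;> fin_cases i <;> simp [coords, B_apply, zm]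

/-! ### Evaluation on index lists -/

/-- Evaluate a form on a list of basis elements. -/
def ev {n : ℕ} (ψ : (sl3 k) [⋀^Fin n]→ₗ[k] k) (l : List ℕ) : k :=
  ψ fun i => B k (l.getD i 0)

/-- Lists attached to `n`-element subsets. -/
lemma combos_exists {n : ℕ} (l : List ℕ) (hl : l ∈ combos n r8) :
    ∃ s : Set.powersetCard (Fin 8) n, ∀ i : Fin n,
      ((Set.powersetCard.ofFinEmbEquiv.symm s i : Fin 8) : ℕ) = l.getD i 0 := by
  obtain ⟨h1, h2⟩ := (mem_combos n r8 l).1 hl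
  have hs : l.Pairwise (· < ·) := List.Pairwise.sublist h1 (by decide)
  have hlt : ∀ i : Fin n, l.getD i 0 < 8 := by
    intro i
    have hi : (i : ℕ) < l.length := by omega
    rw [List.getD_eq_getElem _ _ hi]
    have := h1.subset (List.getElem_mem hi)
    have h8 : ∀ x ∈ r8, x < 8 := by decide
    exact h8 _ this
  let f : Fin n → Fin 8 := fun i => ⟨l.getD i 0, hlt i⟩
  have hf : StrictMono f := by
    intro i j hij
    have hi : (i : ℕ) < l.length := by omega
    have hj : (j : ℕ) < l.length := by omega
    simp only [f, Fin.mk_lt_mk]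
    rw [List.getD_eq_getElem _ _ hi, List.getD_eq_getElem _ _ hj]
    exact List.pairwise_iff_getElem.1 hs _ _ hi hj hij
  refine ⟨Set.powersetCard.ofFinEmbEquiv (OrderEmbedding.ofStrictMono f hf), fun i => ?_⟩
  rw [Equiv.symm_apply_apply]
  rfl

/-- The list attached to an `n`-element subset. -/
def toL {n : ℕ} (s : Set.powersetCard (Fin 8) n) : List ℕ :=
  List.ofFn fun i => ((Set.powersetCard.ofFinEmbEquiv.symm s i : Fin 8) : ℕ)

lemma toL_mem {n : ℕ} (s : Set.powersetCard (Fin 8) n) : toL s ∈ combos n r8 := by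
  rw [mem_combos]
  refine ⟨?_, by simp [toL]⟩
  have hs : (toL s).Pairwise (· < ·) := by
    rw [toL, List.pairwise_ofFn]
    intro i j hij
    exact (Set.powersetCard.ofFinEmbEquiv.symm s).strictMono hij
  have hr : r8.Pairwise (· < ·) := by decide
  apply List.sublist_of_subperm_of_pairwise (r := (· < ·)) _ hs hr
  apply List.subperm_of_subset (hs.imp (fun h => ne_of_lt h))
  intro x hx
  rw [toL, List.mem_ofFn] at hx
  obtain ⟨i, rfl⟩ := hx
  have : ∀ y : Fin 8, (y : ℕ) ∈ r8 := by decide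
  exact this _

lemma toL_getD {n : ℕ} (s : Set.powersetCard (Fin 8) n) (i : Fin n) :
    (toL s).getD i 0 = ((Set.powersetCard.ofFinEmbEquiv.symm s i : Fin 8) : ℕ) := by
  rw [List.getD_eq_getElem _ _ (by simp [toL])]
  simp [toL]

lemma ev_eq_family {n : ℕ} (ψ : (sl3 k) [⋀^Fin n]→ₗ[k] k) (l : List ℕ)
    (s : Set.powersetCard (Fin 8) n)
    (hs : ∀ i : Fin n, ((Set.powersetCard.ofFinEmbEquiv.symm s i : Fin 8) : ℕ) = l.getD i 0) :
    ev ψ l = exteriorPower.alternatingMapLinearEquiv ψ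
      (exteriorPower.ιMulti_family k n (bas k) s) := by
  rw [exteriorPower.ιMulti_family, exteriorPower.alternatingMapLinearEquiv_apply_ιMulti, ev]
  congr 1
  funext i
  rw [Function.comp_apply, bas_apply, hs]

lemma ext_ev {n : ℕ} (ψ φ : (sl3 k) [⋀^Fin n]→ₗ[k] k)
    (h : ∀ l ∈ combos n r8, ev ψ l = ev φ l) : ψ = φ := by
  apply exteriorPower.alternatingMapLinearEquiv.injective
  apply ((bas k).exteriorPower n).ext
  intro s
  rw [exteriorPower.basis_apply, ← ev_eq_family ψ (toL s) s (fun i => (toL_getD s i).symm),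
    ← ev_eq_family φ (toL s) s (fun i => (toL_getD s i).symm)]
  exact h _ (toL_mem s)

lemma exists_ev {n : ℕ} (y : List ℕ → k) :
    ∃ ψ : (sl3 k) [⋀^Fin n]→ₗ[k] k, ∀ l ∈ combos n r8, ev ψ l = y l := by
  refine ⟨exteriorPower.alternatingMapLinearEquiv.symm
    (((bas k).exteriorPower n).constr k fun s => y (toL s)), fun l hl => ?_⟩
  obtain ⟨s, hs⟩ := combos_exists l hl
  rw [ev_eq_family _ l s hs, LinearEquiv.apply_symm_apply, ← exteriorPower.basis_apply,
    Module.Basis.constr_basis]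
  congr 1
  have hlen := ((mem_combos n r8 l).1 hl).2
  apply List.ext_getElem
  · simp [toL, hlen]
  · intro i h1 h2
    have := hs ⟨i, by omega⟩
    rw [List.getD_eq_getElem _ _ (by simpa using h2)] at this
    simp only [toL, List.getElem_ofFn]
    exact this

/-! ### Insertion and the differential on index lists -/

lemma ev_swap {n : ℕ} (ψ : (sl3 k) [⋀^Fin n]→ₗ[k] k) (p r : List ℕ) (a c : ℕ)
    (hn : (p ++ c :: a :: r).length = n) :
    ev ψ (p ++ c :: a :: r) = - ev ψ (p ++ a :: c :: r) := by
  simp only [List.length_append, List.length_cons] at hn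
  let i : Fin n := ⟨p.length, by omega⟩
  let j : Fin n := ⟨p.length + 1, by omega⟩
  have hij : i ≠ j := by simp [i, j]
  rw [ev, ev, ← ψ.map_swap _ hij]
  congr 1
  funext t
  simp only [Function.comp_apply]
  congr 1
  by_cases h1 : t = i
  · subst h1
    rw [Equiv.swap_apply_left]
    simp [i, j]
  by_cases h2 : t = j
  · subst h2
    rw [Equiv.swap_apply_right]
    simp [i, j]
  rw [Equiv.swap_apply_of_ne_of_ne h1 h2]
  have h1' : (t : ℕ) ≠ p.length := fun h => h1 (Fin.ext h)
  have h2' : (t : ℕ) ≠ p.length + 1 := fun h => h2 (Fin.ext h)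
  simp only [List.getD_eq_getElem?_getD, List.getElem?_append]
  split_ifs with h
  · rfl
  · obtain ⟨q, hq⟩ : ∃ q, (t : ℕ) - p.length = q + 2 := ⟨t - p.length - 2, by omega⟩
    rw [hq]; simp

lemma ev_dup {n : ℕ} (ψ : (sl3 k) [⋀^Fin n]→ₗ[k] k) (p r : List ℕ) (a : ℕ)
    (hn : (p ++ a :: a :: r).length = n) :
    ev ψ (p ++ a :: a :: r) = 0 := by
  simp only [List.length_append, List.length_cons] at hn
  let i : Fin n := ⟨p.length, by omega⟩
  let j : Fin n := ⟨p.length + 1, by omega⟩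
  have hij : i ≠ j := by simp [i, j]
  refine ψ.map_eq_zero_of_eq _ ?_ hij
  simp [i, j]

lemma ev_ins [CharP k 3] {n : ℕ} (ψ : (sl3 k) [⋀^Fin n]→ₗ[k] k) (c : ℕ) (r p : List ℕ)
    (hn : (p ++ c :: r).length = n) :
    lin (fun q => ev ψ (p ++ q)) (ins c r) = ev ψ (p ++ c :: r) := by
  have h3 : (3 : k) = 0 := by exact_mod_cast CharP.cast_eq_zero k 3
  induction r generalizing p with
  | nil => simp [ins, lin]
  | cons a r ih =>
    rw [ins]
    cases h1 : Nat.blt c a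
    · cases h2 : Nat.beq c a
      · simp only [cond_false]
        have := ih (p ++ [a]) (by simpa using hn)
        rw [ev_swap ψ p r a c hn]
        simp only [List.append_assoc, List.singleton_append] at this
        rw [← this]
        simp only [lin, List.map_map, Function.comp_def, Nat.cast_mul, mul_assoc]
        rw [List.sum_map_mul_left]
        push_cast
        linear_combination
          (List.map (fun x : ℕ × List ℕ => (x.1 : k) * ev ψ (p ++ a :: x.2)) (ins c r)).sum * h3
      · simp only [cond_true, cond_false]
        have := Nat.eq_of_beq_eq_true h2
        subst this
        rw [ev_dup ψ p r c hn, lin_nil]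
    · simp [lin]

lemma ev_cons_sum {n : ℕ} (ψ : (sl3 k) [⋀^Fin (n + 1)]→ₗ[k] k) (L : List (ℕ × ℕ))
    (m : List ℕ) :
    ψ (Fin.cons ((L.map fun p => (p.1 : k) • B k p.2).sum) fun i => B k (m.getD i 0))
      = (L.map fun p => (p.1 : k) * ev ψ (p.2 :: m)).sum := by
  have h : ∀ x, ψ (Fin.cons x fun i => B k (m.getD i 0))
      = curryLeft ψ x (fun i => B k (m.getD i 0)) := fun _ => rfl
  rw [h]
  induction L with
  | nil => simp
  | cons p L ih =>
    rw [List.map_cons, List.sum_cons, map_add, AlternatingMap.add_apply, ih, List.map_cons,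
      List.sum_cons, map_smul, AlternatingMap.smul_apply, ← h, smul_eq_mul, ev]
    congr 3
    funext i
    refine Fin.cases ?_ (fun i => ?_) i <;> simp

lemma sum_range_map_fin (n : ℕ) (f : ℕ → k) :
    ((List.range n).map f).sum = ∑ i : Fin n, f i := by
  induction n with
  | zero => simp
  | succ n ih => rw [List.range_succ, Fin.sum_univ_castSucc]; simp [ih]

lemma ev_dl [CharP k 3] {n : ℕ} (ψ : (sl3 k) [⋀^Fin (n + 1)]→ₗ[k] k) (l : List ℕ)
    (hl : l ∈ combos (n + 2) r8) : ev (dA ψ) l = lin (ev ψ) (dl l) := by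
  have h3 : (3 : k) = 0 := by exact_mod_cast CharP.cast_eq_zero k 3
  obtain ⟨hsub, hlen⟩ := (mem_combos _ _ _).1 hl
  have hlt : ∀ i : Fin (n + 2), l.getD i 0 < 8 := by
    intro i
    have hi : (i : ℕ) < l.length := by omega
    rw [List.getD_eq_getElem _ _ hi]
    have h8 : ∀ x ∈ r8, x < 8 := by decide
    exact h8 _ (hsub.subset (List.getElem_mem hi))
  rw [ev, dA_apply, ceD_apply, dl, lin_flatMap, hlen, sum_range_map_fin]
  refine Finset.sum_congr rfl fun i _ => ?_
  rw [lin_flatMap, sum_range_map_fin]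
  refine Finset.sum_congr rfl fun j _ => ?_
  by_cases h : i < j
  · have hb : Nat.blt i j = true := by simpa using h
    rw [dif_pos h, hb, cond_true, lin_flatMap, bracket_B _ _ (hlt i) (hlt j)]
    have hr : (fun t : Fin n => B k (l.getD (i.succAbove
          ((j.pred (Fin.pos_iff_ne_zero.mp (lt_of_le_of_lt i.zero_le h))).succAbove t)) 0))
        = fun t : Fin n => B k (((l.eraseIdx j).eraseIdx i).getD t 0) := by
      funext t
      congr 1
      simp only [List.getD_eq_getElem?_getD, List.getElem?_eraseIdx]
      have h' : (i : ℕ) < j := h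
      simp only [Fin.succAbove, Fin.lt_def, Fin.val_castSucc, Fin.val_pred]
      split_ifs <;> simp_all <;> omega
    rw [hr, ev_cons_sum, zsmul_eq_mul, ← List.sum_map_mul_left]
    congr 1
    refine List.map_congr_left fun p _ => ?_
    rw [lin_map_mul]
    have hlen2 : ((l.eraseIdx j).eraseIdx i).length = n := by
      have h' : (i : ℕ) < j := h
      rw [List.length_eraseIdx_of_lt, List.length_eraseIdx_of_lt] <;>
        first | omega | (rw [List.length_eraseIdx_of_lt] <;> omega)
    have := ev_ins ψ p.2 ((l.eraseIdx j).eraseIdx i) [] (by simp [hlen2])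
    simp only [List.nil_append] at this
    rw [this, ← mul_assoc]
    congr 1
    rcases Nat.even_or_odd ((i : ℕ) + j) with he | ho
    · rw [he.neg_one_pow, Nat.even_iff.1 he]
      simp
    · rw [ho.neg_one_pow, Nat.odd_iff.1 ho]
      have : Nat.beq 1 0 = false := rfl
      rw [this, cond_false]
      push_cast
      linear_combination -(p.1 : k) * h3
  · have hb : Nat.blt i j = false := by
      rw [← Bool.not_eq_true]; simpa using h
    rw [dif_neg h, hb, cond_false, lin_nil]

end SL3

namespace SL3

open AlternatingMap

variable {k : Type*} [Field k]

lemma of_any {S : List (List ℕ)} {l : List ℕ} (h : (S.any fun m => keq l m) = true) :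
    l ∈ S := by
  obtain ⟨m, hm, h⟩ := List.any_eq_true.1 h
  rw [(keq_iff l m).1 h]
  exact hm

lemma lin_sum {ι : Type*} (s : Finset ι) (c : ι → k) (x : ι → List ℕ → k) (L : FC) :
    lin (fun l => ∑ i ∈ s, c i * x i l) L = ∑ i ∈ s, c i * lin (x i) L := by
  induction L with
  | nil => simp [lin]
  | cons p L ih =>
    simp only [lin_cons, ih, mul_add, Finset.sum_add_distrib, Finset.mul_sum]
    congr 1
    refine Finset.sum_congr rfl fun i _ => by ring

lemma lin_natCast (q : List ℕ → ℕ) (L : FC) :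
    lin (fun l => (q l : k)) L = (((L.map fun p => p.1 * q p.2).sum : ℕ) : k) := by
  induction L with
  | nil => simp [lin]
  | cons p L ih => rw [lin_cons, ih]; simp

lemma lin_neg [CharP k 3] (x : List ℕ → k) (L : FC) : lin x (neg L) = - lin x L := by
  have h3 : (3 : k) = 0 := by exact_mod_cast CharP.cast_eq_zero k 3
  rw [neg, lin_map_mul]
  push_cast
  linear_combination lin x L * h3

lemma mem_Z_iff [CharP k 3] (ψ : (sl3 k) [⋀^Fin 5]→ₗ[k] k) :
    ψ ∈ ceZ k (sl3 k) k 5 ↔ ∀ l ∈ combos 6 r8, lin (ev ψ) (dl l) = 0 := by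
  have h : ψ ∈ ceZ k (sl3 k) k 5 ↔ dA ψ = 0 := by
    constructor
    · intro h
      ext v
      rw [dA_apply]
      exact h v
    · intro h v
      rw [← dA_apply, h]
      rfl
  rw [h]
  constructor
  · intro h l hl
    rw [← ev_dl ψ l hl, h]
    rfl
  · intro h
    refine ext_ev _ _ fun l hl => ?_
    rw [ev_dl ψ l hl, h l hl]
    rfl

lemma mem_B_iff [CharP k 3] (ψ : (sl3 k) [⋀^Fin 5]→ₗ[k] k) :
    ψ ∈ ceB k (sl3 k) k 5 ↔ ∃ φ : (sl3 k) [⋀^Fin 4]→ₗ[k] k,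
      ∀ l ∈ combos 5 r8, ev ψ l = lin (ev φ) (dl l) := by
  have h : ψ ∈ ceB k (sl3 k) k 5 ↔ ∃ φ : (sl3 k) [⋀^Fin 4]→ₗ[k] k, ψ = dA φ := by
    constructor
    · rintro ⟨φ, h⟩
      refine ⟨φ, ?_⟩
      ext v
      rw [dA_apply]
      exact h v
    · rintro ⟨φ, h⟩
      refine ⟨φ, fun v => ?_⟩
      rw [← dA_apply, h]
  rw [h]
  refine exists_congr fun φ => ?_
  constructor
  · rintro rfl l hl
    exact ev_dl φ l hl
  · intro h
    refine ext_ev _ _ fun l hl => ?_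
    rw [ev_dl φ l hl, h l hl]

variable (k) in
/-- The seven cohomology coordinates of a cocycle. -/
noncomputable def pMap : ↥(ceZ k (sl3 k) k 5) →ₗ[k] (Fin 7 → k) where
  toFun ψ i := lin (ev ψ.1) (pRow i)
  map_add' ψ φ := by
    funext i
    simp only [lin, Pi.add_apply, ← List.sum_map_add, ← mul_add]
    rfl
  map_smul' c ψ := by
    funext i
    simp only [lin, Pi.smul_apply, smul_eq_mul, RingHom.id_apply, ← List.sum_map_mul_left]
    congr 1
    refine List.map_congr_left fun p _ => ?_
    have : ev (c • ψ).1 p.2 = c * ev ψ.1 p.2 := rfl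
    rw [this]
    ring

lemma pMap_surj [CharP k 3] : Function.Surjective (pMap k) := by
  intro y
  obtain ⟨ψ, hψ⟩ := exists_ev (k := k) (n := 5)
    (fun l => ∑ i : Fin 7, y i * (qc i l : k))
  have key : ∀ L : FC, (∀ p ∈ L, p.2 ∈ combos 5 r8) → lin (ev ψ) L =
      ∑ i : Fin 7, y i * (((L.map fun p => p.1 * qc i p.2).sum : ℕ) : k) := by
    intro L hL
    rw [lin_congr (ev ψ) (fun l => ∑ i : Fin 7, y i * (qc i l : k)) L (fun p hp => hψ p.2 (hL p hp)), lin_sum]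
    simp only [lin_natCast]
  have hZ : ψ ∈ ceZ k (sl3 k) k 5 := by
    rw [mem_Z_iff]
    intro l hl
    rw [key (dl l) (fun p hp =>
      of_any (List.all_eq_true.1 (List.all_eq_true.1 check_keys5 l hl) p hp))]
    refine Finset.sum_eq_zero fun i _ => ?_
    have := Nat.eq_of_beq_eq_true (List.all_eq_true.1 (List.all_eq_true.1 check_Q l hl) i
      (List.mem_range.2 i.2))
    rw [(CharP.cast_eq_zero_iff k 3 _).2 (Nat.dvd_of_mod_eq_zero this), mul_zero]
  refine ⟨⟨ψ, hZ⟩, ?_⟩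
  funext j
  change lin (ev ψ) (pRow j) = y j
  rw [key (pRow j) (fun p hp => of_any (List.all_eq_true.1
    (List.all_eq_true.1 check_keysP j (List.mem_range.2 j.2)) p hp))]
  rw [Finset.sum_eq_single j]
  · have := Nat.eq_of_beq_eq_true (List.all_eq_true.1 (List.all_eq_true.1 check_PQ j
      (List.mem_range.2 j.2)) j (List.mem_range.2 j.2))
    have hj : Nat.beq j j = true := by simp
    rw [hj, cond_true] at this
    rw [← Nat.div_add_mod (((pRow j).map fun p => p.1 * qc j p.2).sum) 3, this]
    push_cast
    have h3 : (3 : k) = 0 := by exact_mod_cast CharP.cast_eq_zero k 3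
    rw [h3]
    ring
  · intro i _ hij
    have := Nat.eq_of_beq_eq_true (List.all_eq_true.1 (List.all_eq_true.1 check_PQ j
      (List.mem_range.2 j.2)) i (List.mem_range.2 i.2))
    have hj : Nat.beq i j = false := by
      rw [← Bool.not_eq_true]
      intro h
      exact hij (Fin.ext (Nat.eq_of_beq_eq_true h))
    rw [hj, cond_false] at this
    rw [(CharP.cast_eq_zero_iff k 3 _).2 (Nat.dvd_of_mod_eq_zero this), mul_zero]
  · simp

lemma check_qRow : ((combos 5 r8).all fun l => (qRow l).all fun p => Nat.blt p.2 7) = true := by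
  decide +kernel

lemma pMap_ker [CharP k 3] : LinearMap.ker (pMap k) =
    (ceB k (sl3 k) k 5).comap (ceZ k (sl3 k) k 5).subtype := by
  ext ⟨ψ, hψ⟩
  rw [LinearMap.mem_ker, Submodule.mem_comap, Submodule.subtype_apply, mem_B_iff]
  constructor
  · intro h
    have hp : ∀ i < 7, lin (ev ψ) (pRow i) = 0 := fun i hi => congrFun h ⟨i, hi⟩
    obtain ⟨φ, hφ⟩ := exists_ev (k := k) (n := 4) (fun m => lin (ev ψ) (h1 m))
    refine ⟨φ, fun l hl => ?_⟩
    rw [lin_congr (ev φ) (fun m => lin (ev ψ) (h1 m)) (dl l) (fun p hp => hφ p.2 (of_any (List.all_eq_true.1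
      (List.all_eq_true.1 check_keys4 l hl) p hp)))]
    have hz := lin_eq_zero (ev ψ) _ (List.all_eq_true.1 check_homotopy l hl)
    rw [lin_cons, lin_append, lin_append, lin_neg, lin_neg, lin_neg, lin_bind, lin_bind] at hz
    have e1 : lin (fun m => lin (ev ψ) (dl m)) (h2 l) = 0 := by
      rw [lin_congr _ (fun _ => 0) (h2 l) (fun p hp => (mem_Z_iff ψ).1 hψ p.2
        (of_any (List.all_eq_true.1 (List.all_eq_true.1 check_keysH2 l hl) p hp)))]
      simp [lin]
    have e2 : lin (ev ψ) ((qRow l).flatMap fun p =>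
        (pRow p.2).map fun q => (p.1 * q.1, q.2)) = 0 := by
      rw [lin_flatMap]
      apply List.sum_eq_zero
      intro x hx
      obtain ⟨p, hpq, rfl⟩ := List.mem_map.1 hx
      have hlt := List.all_eq_true.1 (List.all_eq_true.1 check_qRow l hl) p hpq
      rw [lin_map_mul, hp p.2 (by simpa using hlt), mul_zero]
    rw [e1, e2] at hz
    push_cast at hz
    linear_combination hz
  · rintro ⟨φ, hφ⟩
    funext i
    change lin (ev ψ) (pRow i) = 0
    rw [lin_congr (ev ψ) (fun m => lin (ev φ) (dl m)) (pRow i) (fun p hp => hφ p.2 (of_any (List.all_eq_true.1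
      (List.all_eq_true.1 check_keysP i (List.mem_range.2 i.2)) p hp))), ← lin_bind]
    exact lin_eq_zero _ _ (List.all_eq_true.1 check_P i (List.mem_range.2 i.2))

/-- A surjection from cocycles with kernel the coboundaries computes the dimension. -/
lemma finrank_ceH_of (k : Type*) [Field k] (g : Type*) [LieRing g] [LieAlgebra k g]
    (M : Type*) [AddCommGroup M] [Module k M] [LieRingModule g M] [LieModule k g M] (n r : ℕ)
    (f : ↥(ceZ k g M n) →ₗ[k] (Fin r → k)) (hf : Function.Surjective f)
    (hk : ∀ ψ, f ψ = 0 ↔ ψ.1 ∈ ceB k g M n) : Module.finrank k (ceH k g M n) = r := by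
  have hker : LinearMap.ker f = (ceB k g M n).comap (ceZ k g M n).subtype := by
    ext ψ
    exact hk ψ
  have e2 := LinearEquiv.finrank_eq (f.quotKerEquivOfSurjective hf)
  rw [hker] at e2
  rw [e2]
  simp

end SL3

theorem H5_trivial_coeffs_dim (k : Type*) [Field k] [IsAlgClosed k] [CharP k 3] :
    Module.finrank k (ceH k (sl3 k) k 5) = 7 := by
  refine SL3.finrank_ceH_of k (sl3 k) k 5 7 (SL3.pMap k) SL3.pMap_surj fun ψ => ?_
  have h := SetLike.ext_iff.1 (SL3.pMap_ker (k := k)) ψ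
  exact h
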